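/- Let X be a locally compact Hausdorff space, H a Hilbert space, and φ ↦ φ(Q) a nondegenerate *-homomorphism from C₀(X) into B(H). Let R be a bounded self-adjoint operator on H such that (i) φ(Q)R is compact for every φ ∈ C₀(X), and (ii) ±R ≤ θ(Q) for some nonnegative θ ∈ C₀(X). Then R is compact. -/

import Mathlib

open scoped ZeroAtInfty

open Filter Topology in
/-- For nonnegative `θ ∈ C₀(X)` the quotient `e = θ / (θ + ε)` lies in `C₀(X)`, is real, and
satisfies `(1 - e)² θ ≤ ε`. -/
theorem ZeroAtInftyContinuousMap.exists_isSelfAdjoint_norm_sub_le {X : Type*} [TopologicalSpace X]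
    (θ : C₀(X, ℂ)) (hθ : ∀ x, ∃ t : ℝ, 0 ≤ t ∧ θ x = t) {ε : ℝ} (hε : 0 < ε) :
    ∃ e : C₀(X, ℂ), IsSelfAdjoint e ∧ ‖θ - e * θ - θ * e + e * θ * e‖ ≤ ε := by
  have hne : ∀ x, θ x + ε ≠ 0 := fun x => by
    obtain ⟨t, ht, h⟩ := hθ x
    rw [h]
    exact_mod_cast (by positivity : t + ε ≠ 0)
  let e : C₀(X, ℂ) :=
    { toFun := fun x => θ x / (θ x + ε)
      continuous_toFun := by
        have := map_continuous θ
        exact this.div (by fun_prop) hne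
      zero_at_infty' := by
        have h := θ.zero_at_infty'
        have hd : Tendsto (fun x => θ x + (ε : ℂ)) (cocompact X) (𝓝 (0 + ε)) :=
          Tendsto.add_const _ h
        have := Tendsto.div h hd (by simpa using hε.ne')
        simpa using! this }
  have he : ∀ x, e x = θ x / (θ x + ε) := fun _ => rfl
  refine ⟨e, ?_, ?_⟩
  · refine ZeroAtInftyContinuousMap.ext fun x => ?_
    obtain ⟨t, ht, h⟩ := hθ x
    simp [he, h]
  · rw [← ZeroAtInftyContinuousMap.norm_toBCF_eq_norm, BoundedContinuousFunction.norm_le hε.le]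
    intro x
    change ‖θ x - e x * θ x - θ x * e x + e x * θ x * e x‖ ≤ ε
    obtain ⟨t, ht, h⟩ := hθ x
    have hp : 0 < t + ε := by positivity
    have key : θ x - e x * θ x - θ x * e x + e x * θ x * e x
        = ((ε ^ 2 * t / (t + ε) ^ 2 : ℝ) : ℂ) := by
      have := hne x
      rw [he, h] at *
      push_cast
      field_simp
      ring
    rw [key, Complex.norm_of_nonneg (by positivity), div_le_iff₀ (by positivity)]
    nlinarith [mul_pos hε hε, mul_nonneg hε.le ht, mul_nonneg hε.le (mul_nonneg ht ht),
      mul_nonneg (mul_nonneg hε.le hε.le) ht, pow_pos hε 3]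

/-- If `±R ≤ T`, then `2 Re ⟪Rv, w⟫ ≤ Re ⟪Tw, w⟫ + Re ⟪Tv, v⟫`. -/
theorem ContinuousLinearMap.two_mul_re_inner_le {H : Type*} [NormedAddCommGroup H]
    [InnerProductSpace ℂ H] [CompleteSpace H] {R T : H →L[ℂ] H} (hR : IsSelfAdjoint R)
    (h1 : (T - R).IsPositive) (h2 : (T + R).IsPositive) (v w : H) :
    2 * (inner ℂ (R v) w).re ≤ (inner ℂ (T w) w).re + (inner ℂ (T v) v).re := by
  have a := h1.re_inner_nonneg_left (w + v)
  have b := h2.re_inner_nonneg_left (w - v)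
  have s : (inner ℂ (R w) v).re = (inner ℂ (R v) w).re := by
    rw [show inner ℂ (R w) v = inner ℂ w (R v) from hR.isSymmetric w v]
    exact inner_re_symm (𝕜 := ℂ) w (R v)
  simp only [sub_apply, add_apply, map_add, map_sub, inner_add_left, inner_add_right,
    inner_sub_left, inner_sub_right, RCLike.re_eq_complex_re]
    at a b
  linarith

/-- If `±R ≤ T` and `E` is self-adjoint with `‖(1 - E) T (1 - E)‖ ≤ ε`, then
`‖(1 - E) R‖² ≤ ε ‖T‖`. -/
theorem ContinuousLinearMap.norm_sub_mul_sq_le {H : Type*} [NormedAddCommGroup H]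
    [InnerProductSpace ℂ H] [CompleteSpace H] {R T E : H →L[ℂ] H} (hR : IsSelfAdjoint R)
    (h1 : (T - R).IsPositive) (h2 : (T + R).IsPositive) (hE : IsSelfAdjoint E) {ε : ℝ}
    (hε : 0 < ε) (hT : ‖T - E * T - T * E + E * T * E‖ ≤ ε) :
    ‖R - E * R‖ ^ 2 ≤ ε * ‖T‖ := by
  suffices ‖R - E * R‖ ≤ √(ε * ‖T‖) by
    rw [← Real.sq_sqrt (by positivity : 0 ≤ ε * ‖T‖)]
    gcongr
  refine opNorm_le_bound _ (by positivity) fun v => ?_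
  set y := (R - E * R) v with hy
  set z := y - E y with hz
  have hEs : ∀ a b, inner ℂ (E a) b = inner ℂ a (E b) := hE.isSymmetric
  have hRz : inner ℂ (R v) z = inner ℂ y y := by
    rw [hz, inner_sub_right, ← hEs, ← inner_sub_left, hy]
    rfl
  have hTz : inner ℂ (T z) z = inner ℂ ((T - E * T - T * E + E * T * E) y) y := by
    rw [hz, inner_sub_right, ← hEs, ← inner_sub_left]
    congr 1
    simp
    abel
  have hbound : ∀ (S : H →L[ℂ] H) (x : H), (inner ℂ (S x) x).re ≤ ‖S‖ * ‖x‖ ^ 2 := fun S x => by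
    calc (inner ℂ (S x) x).re ≤ ‖S x‖ * ‖x‖ := re_inner_le_norm (𝕜 := ℂ) _ _
      _ ≤ ‖S‖ * ‖x‖ * ‖x‖ := by gcongr; exact S.le_opNorm x
      _ = ‖S‖ * ‖x‖ ^ 2 := by ring
  have hTy : (inner ℂ (T z) z).re ≤ ε * ‖y‖ ^ 2 := by
    rw [hTz]
    exact (hbound _ y).trans (by gcongr)
  have hyy : (inner ℂ y y).re = ‖y‖ ^ 2 := inner_self_eq_norm_sq (𝕜 := ℂ) y
  have main := two_mul_re_inner_le hR h1 h2 (((ε : ℝ) : ℂ) • v) z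
  simp only [map_smul, inner_smul_left, inner_smul_right, Complex.conj_ofReal,
    Complex.re_ofReal_mul, hRz, hyy] at main
  have hv := mul_le_mul_of_nonneg_left (hbound T v) (sq_nonneg ε)
  have hfin : ‖y‖ ^ 2 ≤ ε * ‖T‖ * ‖v‖ ^ 2 := by
    refine le_of_mul_le_mul_left ?_ hε
    nlinarith
  refine abs_le_of_sq_le_sq' ?_ (by positivity) |>.2
  rwa [mul_pow, Real.sq_sqrt (by positivity)]

/-- **Compactness criterion.** Let `φ ↦ φ(Q)` be a nondegenerate *-homomorphism from
`C₀(X)` into `B(H)`. If `R` is a bounded self-adjoint operator such that `φ(Q)R` is compact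
for all `φ ∈ C₀(X)`, and `±R ≤ θ(Q)` for some nonnegative `θ ∈ C₀(X)`, then `R` is compact. -/
theorem stmt4 {X : Type*} [TopologicalSpace X] [LocallyCompactSpace X] [T2Space X]
    {H : Type*} [NormedAddCommGroup H] [InnerProductSpace ℂ H] [CompleteSpace H]
    (Φ : C₀(X, ℂ) →⋆ₙₐ[ℂ] (H →L[ℂ] H))
    (hnd : Dense (Submodule.span ℂ {y : H | ∃ (φ : C₀(X, ℂ)) (f : H), Φ φ f = y} : Set H))
    (R : H →L[ℂ] H) (hR : IsSelfAdjoint R)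
    (hcomp : ∀ φ : C₀(X, ℂ), IsCompactOperator ⇑(Φ φ ∘L R))
    (θ : C₀(X, ℂ)) (hθ : ∀ x, ∃ t : ℝ, 0 ≤ t ∧ θ x = t)
    (h1 : (Φ θ - R).IsPositive) (h2 : (Φ θ + R).IsPositive) :
    IsCompactOperator ⇑R := by
  have hmem : R ∈ closure {f : H →L[ℂ] H | IsCompactOperator f} := by
    refine Metric.mem_closure_iff.2 fun δ hδ => ?_
    set ε := δ ^ 2 / (‖Φ θ‖ + 1) with hε_def
    have hε : 0 < ε := by positivity
    obtain ⟨e, he, hle⟩ := θ.exists_isSelfAdjoint_norm_sub_le hθ hε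
    have hE : IsSelfAdjoint (Φ e) := he.map Φ
    refine ⟨Φ e * R, hcomp e, ?_⟩
    have hT : ‖Φ θ - Φ e * Φ θ - Φ θ * Φ e + Φ e * Φ θ * Φ e‖ ≤ ε := by
      simp only [← map_mul, ← map_sub, ← map_add]
      exact (NonUnitalStarAlgHom.norm_apply_le Φ _).trans hle
    have hsq := ContinuousLinearMap.norm_sub_mul_sq_le hR h1 h2 hE hε hT
    rw [dist_eq_norm]
    refine lt_of_pow_lt_pow_left₀ 2 hδ.le (hsq.trans_lt ?_)
    have : ε * (‖Φ θ‖ + 1) = δ ^ 2 := div_mul_cancel₀ _ (by positivity)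
    linarith
  rwa [isClosed_setOfPred_isCompactOperator.closure_eq] at hmem
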